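/- With a(n) = 8(3n^2 − n − 1)/n^2 and b(n) = −128(n−2)/(n−1), and with c_3(n) and Δ(n) the associated quantities from the three-term-recurrence criterion, both c_3(n) and Δ(n) are positive for all integers n ≥ 1; explicitly, c_3(n) = 512(n^8 + 17n^7 + 131n^6 + 484n^5 + 872n^4 + 682n^3 + 51n^2 − 177n − 45)/((n+1)^6 (n+2)^2 (n+3)^2) > 0 for all n ≥ 1. -/

import Mathlib

/-! The coefficients at shifted arguments are rational functions of `x = n` without poles for
`n ≥ 1`, so each `c_i(n)` can be put over a common denominator with a polynomial numerator
(`numC1`, `numC2`, `numC3` below). In these terms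
`Δ(n) = 2^26 * (numC2^2 - 12 (n+2)^2 numC1 numC3) / (n^2 (n+1)^8 (n+2)^8 (n+3)^4)`,
and expanding the bracket in powers of `n` yields a polynomial all of whose coefficients are
positive (`discr_expand`). The leading terms of the two products nearly cancel (`25 - 24 = 1`),
so crude separate bounds on them do not decide the sign of `Δ`. For `c_3` the numerator
is positive at `n ≥ 1` because its expansion in powers of `n - 1` has positive coefficients. -/

/-- `c_1(n)` associated to a three-term recurrence with coefficients `a`, `b`. -/
noncomputable def c1 (a b : ℕ → ℝ) (n : ℕ) : ℝ :=
  b (n+1) * (2 * a (n+2) * b (n+1) + 2 * a (n+3) * a (n+2) * a (n+1)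
    + a (n+3) * b (n+2) + 2 * a (n+1) * b (n+3) - 2 * a (n+2) ^ 2 * a (n+1)
    - 2 * a (n+2) * b (n+2) - 3 * a (n+1) * b (n+1))

/-- `c_2(n)` associated to a three-term recurrence with coefficients `a`, `b`. -/
noncomputable def c2 (a b : ℕ → ℝ) (n : ℕ) : ℝ :=
  4 * a (n+1) * a (n+2) * b (n+1) + 2 * b (n+1) * b (n+2)
    + a (n+1) ^ 2 * a (n+2) * a (n+3) + a (n+1) * a (n+3) * b (n+2)
    + a (n+1) ^ 2 * b (n+3) - 3 * a (n+1) ^ 2 * b (n+1)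
    - a (n+3) * a (n+2) * b (n+1) - a (n+2) ^ 2 * a (n+1) ^ 2
    - b (n+3) * b (n+1) - 2 * a (n+2) * a (n+1) * b (n+2) - b (n+2) ^ 2

/-- `c_3(n)` associated to a three-term recurrence with coefficients `a`, `b`. -/
noncomputable def c3 (a b : ℕ → ℝ) (n : ℕ) : ℝ :=
  2 * a (n+1) ^ 2 * a (n+2) + 2 * a (n+1) * b (n+2) - a (n+1) * b (n+3)
    - a (n+1) ^ 3 - a (n+1) * a (n+2) * a (n+3) - a (n+3) * b (n+2)

/-- `Δ(n) = 4 c_2(n)^2 - 12 c_1(n) c_3(n)`. -/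
noncomputable def Δ (a b : ℕ → ℝ) (n : ℕ) : ℝ :=
  4 * (c2 a b n) ^ 2 - 12 * (c1 a b n) * (c3 a b n)

/-- The coefficient `a(n) = 8(3n^2 - n - 1)/n^2` of the Fennessey-Larcombe-French
recurrence. -/
noncomputable def aFLF (n : ℕ) : ℝ := 8 * (3 * (n : ℝ) ^ 2 - (n : ℝ) - 1) / (n : ℝ) ^ 2

/-- The coefficient `b(n) = -128(n-2)/(n-1)` of the Fennessey-Larcombe-French
recurrence. -/
noncomputable def bFLF (n : ℕ) : ℝ := -(128 * ((n : ℝ) - 2) / ((n : ℝ) - 1))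

/-- Numerator of `c_1(n) / 2^17` over `n^2 (n+1)^2 (n+2)^4 (n+3)^2`. -/
def numC1 (x : ℝ) : ℝ :=
  2 * x ^ 8 + 33 * x ^ 7 + 233 * x ^ 6 + 760 * x ^ 5 + 980 * x ^ 4 - 201 * x ^ 3
    - 1402 * x ^ 2 - 621 * x + 216

/-- Numerator of `-c_2(n) / 2^12` over `n (n+1)^4 (n+2)^4 (n+3)^2`. -/
def numC2 (x : ℝ) : ℝ :=
  5 * x ^ 9 + 94 * x ^ 8 + 790 * x ^ 7 + 3426 * x ^ 6 + 7831 * x ^ 5 + 8422 * x ^ 4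
    + 1130 * x ^ 3 - 5440 * x ^ 2 - 3667 * x - 360

/-- Numerator of `c_3(n) / 2^9` over `(n+1)^6 (n+2)^2 (n+3)^2`. -/
def numC3 (x : ℝ) : ℝ :=
  x ^ 8 + 17 * x ^ 7 + 131 * x ^ 6 + 484 * x ^ 5 + 872 * x ^ 4 + 682 * x ^ 3
    + 51 * x ^ 2 - 177 * x - 45

lemma aFLF_add (n k : ℕ) :
    aFLF (n + k) = 8 * (3 * ((n : ℝ) + k) ^ 2 - (n + k) - 1) / ((n : ℝ) + k) ^ 2 := by
  simp [aFLF]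

lemma bFLF_succ (n : ℕ) : bFLF (n + 1) = -(128 * ((n : ℝ) - 1) / (n : ℝ)) := by
  simp only [bFLF]
  push_cast
  congr 3 <;> ring

lemma c1_eq (n : ℕ) (hn : 1 ≤ n) :
    c1 aFLF bFLF n = 131072 * numC1 n /
      ((n : ℝ) ^ 2 * ((n : ℝ) + 1) ^ 2 * ((n : ℝ) + 2) ^ 4 * ((n : ℝ) + 3) ^ 2) := by
  have hx : (0 : ℝ) < n := by exact_mod_cast hn
  simp only [c1, bFLF_succ, aFLF_add, numC1]
  push_cast
  generalize (n : ℝ) = x at *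
  field_simp
  ring

lemma c2_eq (n : ℕ) (hn : 1 ≤ n) :
    c2 aFLF bFLF n = -(4096 * numC2 n /
      ((n : ℝ) * ((n : ℝ) + 1) ^ 4 * ((n : ℝ) + 2) ^ 4 * ((n : ℝ) + 3) ^ 2)) := by
  have hx : (0 : ℝ) < n := by exact_mod_cast hn
  simp only [c2, bFLF_succ, aFLF_add, numC2]
  push_cast
  generalize (n : ℝ) = x at *
  field_simp
  ring

lemma c3_eq (n : ℕ) :
    c3 aFLF bFLF n = 512 * numC3 n /
      (((n : ℝ) + 1) ^ 6 * ((n : ℝ) + 2) ^ 2 * ((n : ℝ) + 3) ^ 2) := by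
  have hx : (0 : ℝ) ≤ n := n.cast_nonneg
  simp only [c3, bFLF_succ, aFLF_add, numC3]
  push_cast
  generalize (n : ℝ) = x at *
  field_simp
  ring

lemma numC3_pos {x : ℝ} (hx : 1 ≤ x) : 0 < numC3 x := by
  obtain ⟨y, hy, rfl⟩ : ∃ y : ℝ, 0 ≤ y ∧ x = y + 1 := ⟨x - 1, by linarith, by ring⟩
  unfold numC3
  ring_nf
  positivity

lemma discr_expand (x : ℝ) :
    numC2 x ^ 2 - 12 * (x + 2) ^ 2 * numC1 x * numC3 x =
      x ^ 18 + 40 * x ^ 17 + 752 * x ^ 16 + 8732 * x ^ 15 + 69566 * x ^ 14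
        + 399108 * x ^ 13 + 1687512 * x ^ 12 + 5311376 * x ^ 11 + 12451223 * x ^ 10
        + 21531796 * x ^ 9 + 26834592 * x ^ 8 + 23183984 * x ^ 7 + 13750782 * x ^ 6
        + 8285676 * x ^ 5 + 10267104 * x ^ 4 + 12477380 * x ^ 3 + 9141001 * x ^ 2
        + 3600576 * x + 596160 := by
  unfold numC1 numC2 numC3
  ring

lemma discr_pos {x : ℝ} (hx : 0 < x) :
    0 < numC2 x ^ 2 - 12 * (x + 2) ^ 2 * numC1 x * numC3 x := by
  rw [discr_expand]
  positivity

lemma Δ_eq (n : ℕ) (hn : 1 ≤ n) :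
    Δ aFLF bFLF n =
      67108864 * (numC2 n ^ 2 - 12 * ((n : ℝ) + 2) ^ 2 * numC1 n * numC3 n) /
        ((n : ℝ) ^ 2 * ((n : ℝ) + 1) ^ 8 * ((n : ℝ) + 2) ^ 8 * ((n : ℝ) + 3) ^ 4) := by
  have hx : (0 : ℝ) < n := by exact_mod_cast hn
  rw [Δ, c1_eq n hn, c2_eq n hn, c3_eq n]
  generalize (n : ℝ) = x at *
  field_simp
  ring

/-- For the Fennessey-Larcombe-French recurrence coefficients, both `c_3(n)` and
`Δ(n)` are positive for all `n ≥ 1`, and `c_3(n)` has the stated explicit form. -/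
theorem stmt_17 :
    ∀ n : ℕ, 1 ≤ n →
      0 < c3 aFLF bFLF n ∧ 0 < Δ aFLF bFLF n ∧
        c3 aFLF bFLF n =
          512 * ((n : ℝ) ^ 8 + 17 * (n : ℝ) ^ 7 + 131 * (n : ℝ) ^ 6 + 484 * (n : ℝ) ^ 5
              + 872 * (n : ℝ) ^ 4 + 682 * (n : ℝ) ^ 3 + 51 * (n : ℝ) ^ 2
              - 177 * (n : ℝ) - 45) /
            (((n : ℝ) + 1) ^ 6 * ((n : ℝ) + 2) ^ 2 * ((n : ℝ) + 3) ^ 2) := by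
  intro n hn
  have hx : (1 : ℝ) ≤ n := by exact_mod_cast hn
  have hx0 : (0 : ℝ) < n := by linarith
  refine ⟨?_, ?_, c3_eq n⟩
  · rw [c3_eq]
    have := numC3_pos hx
    positivity
  · rw [Δ_eq n hn]
    have := discr_pos hx0
    positivity
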